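/- Let G(p) be a framework in ℝ^d and let G(p̃) be the framework in ℝ^{d̃} (d̃ > d) obtained by appending zeros: p̃_i := (p_i^T, 0^T)^T ∈ ℝ^{d̃} for every i ∈ V. Then rank(R(p̃)) = rank(R(p)) + (d̃ − d)(n − 1); consequently, G(p̃) is infinitesimally bearing rigid in ℝ^{d̃} if and only if G(p) is infinitesimally bearing rigid in ℝ^d (infinitesimal bearing rigidity is invariant to the space dimension). -/

import Mathlib

/-- `projL x` is the orthogonal projection matrix
`P_x = I - (x/‖x‖)(x/‖x‖)ᵀ`, i.e. `projL x y = y - ⟪x,y⟫/‖x‖² • x`. -/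
noncomputable def projL {d : ℕ} (x : EuclideanSpace ℝ (Fin d)) :
    EuclideanSpace ℝ (Fin d) →ₗ[ℝ] EuclideanSpace ℝ (Fin d) :=
  LinearMap.id - (‖x‖ ^ 2)⁻¹ •
    (LinearMap.toSpanSingleton ℝ (EuclideanSpace ℝ (Fin d)) x ∘ₗ (innerSL ℝ x).toLinearMap)

/-- The bearing rigidity matrix `R(p) = diag(P_{g_k}/‖e_k‖)(H ⊗ I_d)` of the framework
whose `k`-th oriented edge goes from vertex `(E k).1` to vertex `(E k).2`
(so `e_k = p_{(E k).2} - p_{(E k).1}` and `g_k = e_k/‖e_k‖`), viewed as a linear map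
`ℝ^{dn} → ℝ^{dm}`. -/
noncomputable def bearingMap {d n : ℕ} {ι : Type*} (E : ι → Fin n × Fin n)
    (p : Fin n → EuclideanSpace ℝ (Fin d)) :
    (Fin n → EuclideanSpace ℝ (Fin d)) →ₗ[ℝ] (ι → EuclideanSpace ℝ (Fin d)) :=
  LinearMap.pi fun k =>
    (‖p (E k).2 - p (E k).1‖⁻¹ • projL (p (E k).2 - p (E k).1)) ∘ₗ
      ((LinearMap.proj (R := ℝ) (φ := fun _ : Fin n => EuclideanSpace ℝ (Fin d)) (E k).2) -
       (LinearMap.proj (R := ℝ) (φ := fun _ : Fin n => EuclideanSpace ℝ (Fin d)) (E k).1))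

/-!
An infinitesimal motion `v` lies in the kernel of the bearing map iff `v j - v i` is parallel to
`p j - p i` along every edge `(i, j)`. For a lifted framework the edge vectors have no component
in the appended directions, so this splits into the same condition on the original coordinates and
the condition that the appended coordinates of `v` agree along every edge. The latter say that these
coordinates are constant on connected components, so each new dimension enlarges the kernel by the
number `c` of components and the rank by `n - c`.

Rigidity means that the kernel has dimension `d + 1`. As the components can be translated
independently, the kernel has dimension at least `d * c`, which exceeds `d + 1` unless `c = 1`, so
both frameworks fail to be rigid when the graph is disconnected.
-/

section LinearAlgebra

variable {R M N : Type*} [Ring R] [AddCommGroup M] [Module R M] [AddCommGroup N] [Module R N]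

theorem mem_span_singleton_prodMk_zero {x : M} {w : M × N} :
    w ∈ Submodule.span R {(x, (0 : N))} ↔ w.1 ∈ Submodule.span R {x} ∧ w.2 = 0 := by
  have hspan : Submodule.span R {(x, (0 : N))} = (Submodule.span R {x}).prod ⊥ := by
    rw [← Submodule.map_inl, Submodule.map_span, Set.image_singleton, LinearMap.inl_apply]
  rw [hspan, Submodule.mem_prod, Submodule.mem_bot]

theorem finrank_submodule_prod [StrongRankCondition R] (A : Submodule R M) (B : Submodule R N)
    [Module.Free R A] [Module.Free R B] [Module.Finite R A] [Module.Finite R B] :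
    Module.finrank R (A.prod B) = Module.finrank R A + Module.finrank R B := by
  have hrange : LinearMap.range (A.subtype.prodMap B.subtype) = A.prod B := by
    rw [LinearMap.range_prodMap, Submodule.range_subtype, Submodule.range_subtype]
  rw [← hrange, LinearMap.finrank_range_of_inj
    (A.subtype_injective.prodMap B.subtype_injective), Module.finrank_prod]

variable (R M N) in
/-- The linear version of `Equiv.arrowProdEquivProdArrow`, separating a field of pairs into its
two component fields. -/
def arrowProdLinearEquiv (V : Type*) : (V → M × N) ≃ₗ[R] (V → M) × (V → N) where
  __ := Equiv.arrowProdEquivProdArrow V (fun _ => M) (fun _ => N)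
  map_add' _ _ := rfl
  map_smul' _ _ := rfl

end LinearAlgebra

theorem card_connectedComponent_eq_one_iff {V : Type*} {G : SimpleGraph V} :
    Nat.card G.ConnectedComponent = 1 ↔ G.Connected := by
  rw [Nat.card_eq_one_iff_unique, SimpleGraph.connected_iff]
  refine ⟨fun ⟨_, ⟨c⟩⟩ => ⟨fun i j => ?_, c.nonempty_supp.to_type⟩,
    fun ⟨hpre, hV⟩ => ⟨hpre.subsingleton_connectedComponent, hV.map G.connectedComponentMk⟩⟩
  exact SimpleGraph.ConnectedComponent.exact (Subsingleton.elim _ _)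

section Incidence

variable {V ι : Type*}

/-- The undirected graph underlying a family of oriented edges. Loops in the family
are discarded and parallel edges identified. -/
abbrev edgeGraph (E : ι → V × V) : SimpleGraph V :=
  SimpleGraph.fromRel fun i j => ∃ k, E k = (i, j)

variable (R M : Type*) [Ring R] [AddCommGroup M] [Module R M] (E : ι → V × V)

/-- The operator `H ⊗ I_M` of the incidence matrix `H`: the difference of an `M`-valued
function on the vertices along each oriented edge. -/
def edgeDiff : (V → M) →ₗ[R] (ι → M) :=
  LinearMap.funLeft R M (fun k => (E k).2) - LinearMap.funLeft R M (fun k => (E k).1)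

variable {R M E} in
theorem mem_ker_edgeDiff {v : V → M} :
    v ∈ LinearMap.ker (edgeDiff R M E) ↔ ∀ k, v (E k).2 = v (E k).1 := by
  simp [edgeDiff, funext_iff, sub_eq_zero]

theorem ker_edgeDiff :
    LinearMap.ker (edgeDiff R M E) =
      LinearMap.range (LinearMap.funLeft R M (edgeGraph E).connectedComponentMk) := by
  ext v
  rw [mem_ker_edgeDiff]
  constructor
  · intro hv
    have hadj : ∀ i j, (edgeGraph E).Adj i j → v i = v j := by
      rintro i j ⟨-, ⟨k, hk⟩ | ⟨k, hk⟩⟩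
      · simpa [hk] using (hv k).symm
      · simpa [hk] using hv k
    have hwalk : ∀ i j, (edgeGraph E).Walk i j → v i = v j := by
      intro i j w
      induction w with
      | nil => rfl
      | cons h _ ih => exact (hadj _ _ h).trans ih
    exact ⟨SimpleGraph.ConnectedComponent.lift v fun i j w _ => hwalk i j w, rfl⟩
  · rintro ⟨f, rfl⟩ k
    refine congrArg f ?_
    by_cases hloop : (E k).2 = (E k).1
    · rw [hloop]
    · exact SimpleGraph.ConnectedComponent.connectedComponentMk_eq_of_adj
        ⟨hloop, .inr ⟨k, rfl⟩⟩

theorem finrank_ker_edgeDiff [Finite (edgeGraph E).ConnectedComponent] [StrongRankCondition R]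
    [Module.Free R M] [Module.Finite R M] :
    Module.finrank R (LinearMap.ker (edgeDiff R M E)) =
      Module.finrank R M * Nat.card (edgeGraph E).ConnectedComponent := by
  have := Fintype.ofFinite (edgeGraph E).ConnectedComponent
  have hsurj : Function.Surjective (edgeGraph E).connectedComponentMk := Quot.mk_surjective
  rw [ker_edgeDiff, LinearMap.finrank_range_of_inj
    (LinearMap.funLeft_injective_of_surjective R M _ hsurj), Module.finrank_pi_fintype]
  simp [mul_comm]

end Incidence

theorem ker_projL {d : ℕ} (x : EuclideanSpace ℝ (Fin d)) :
    LinearMap.ker (projL x) = Submodule.span ℝ {x} := by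
  ext y
  have hproj : projL x y = y - (Submodule.span ℝ {x}).starProjection y := by
    simp [projL, Submodule.starProjection_singleton, div_eq_inv_mul, mul_smul]
  rw [LinearMap.mem_ker, hproj, sub_eq_zero, eq_comm, Submodule.starProjection_eq_self_iff]

section Bearing

variable {d d' n : ℕ} {ι : Type*} {E : ι → Fin n × Fin n}
  {p v : Fin n → EuclideanSpace ℝ (Fin d)}

theorem bearingMap_apply (k : ι) :
    bearingMap E p v k = ‖p (E k).2 - p (E k).1‖⁻¹ •
      projL (p (E k).2 - p (E k).1) (v (E k).2 - v (E k).1) :=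
  rfl

theorem mem_ker_bearingMap (hp : ∀ k, p (E k).1 ≠ p (E k).2) :
    v ∈ LinearMap.ker (bearingMap E p) ↔
      ∀ k, v (E k).2 - v (E k).1 ∈ Submodule.span ℝ {p (E k).2 - p (E k).1} := by
  have hnorm : ∀ k, ‖p (E k).2 - p (E k).1‖⁻¹ ≠ 0 := fun k =>
    inv_ne_zero (norm_ne_zero_iff.mpr (sub_ne_zero.mpr (hp k).symm))
  simp only [← ker_projL, LinearMap.mem_ker, funext_iff]
  refine forall_congr' fun k => ?_
  rw [bearingMap_apply, Pi.zero_apply, smul_eq_zero_iff_right (hnorm k)]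

variable (E p) in
theorem ker_edgeDiff_le_ker_bearingMap :
    LinearMap.ker (edgeDiff ℝ (EuclideanSpace ℝ (Fin d)) E) ≤ LinearMap.ker (bearingMap E p) := by
  intro v hv
  rw [mem_ker_edgeDiff] at hv
  ext1 k
  rw [bearingMap_apply, hv k, sub_self, map_zero, smul_zero, Pi.zero_apply]

variable (E p) in
theorem finrank_range_bearingMap_add_finrank_ker :
    Module.finrank ℝ (LinearMap.range (bearingMap E p)) +
      Module.finrank ℝ (LinearMap.ker (bearingMap E p)) = d * n := by
  rw [LinearMap.finrank_range_add_finrank_ker, Module.finrank_pi_fintype]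
  simp [mul_comm]

variable (E p) in
/-- Infinitesimal bearing rigidity: the bearing rigidity matrix has the largest rank possible,
`d n - d - 1`. The subtractions are in `ℕ`, which is faithful when `1 ≤ d` and `2 ≤ n`. -/
def InfinitesimallyBearingRigid : Prop :=
  Module.finrank ℝ (LinearMap.range (bearingMap E p)) = d * n - d - 1

theorem infinitesimallyBearingRigid_iff_finrank_ker (hd : 1 ≤ d) (hn : 2 ≤ n) :
    InfinitesimallyBearingRigid E p ↔
      Module.finrank ℝ (LinearMap.ker (bearingMap E p)) = d + 1 := by
  have hrank := finrank_range_bearingMap_add_finrank_ker E p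
  have hdn : d * 2 ≤ d * n := Nat.mul_le_mul_left d hn
  unfold InfinitesimallyBearingRigid
  omega

theorem InfinitesimallyBearingRigid.connected (hd : 2 ≤ d) (hn : 2 ≤ n)
    (h : InfinitesimallyBearingRigid E p) : (edgeGraph E).Connected := by
  rw [infinitesimallyBearingRigid_iff_finrank_ker (by omega) hn] at h
  have htranslations : d * Nat.card (edgeGraph E).ConnectedComponent ≤ d + 1 := by
    simpa [finrank_ker_edgeDiff, h] using
      Submodule.finrank_mono (ker_edgeDiff_le_ker_bearingMap E p)
  have hle : Nat.card (edgeGraph E).ConnectedComponent ≤ 1 := by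
    by_contra! htwo
    have := Nat.mul_le_mul_left d htwo
    omega
  have : Nonempty (edgeGraph E).ConnectedComponent :=
    ⟨(edgeGraph E).connectedComponentMk ⟨0, by omega⟩⟩
  exact card_connectedComponent_eq_one_iff.mp (hle.antisymm Nat.card_pos)

section Lift

variable {M : Type*} [AddCommGroup M] [Module ℝ M]
  {q : Fin n → EuclideanSpace ℝ (Fin d')}
  (e : EuclideanSpace ℝ (Fin d') ≃ₗ[ℝ] EuclideanSpace ℝ (Fin d) × M)

theorem mem_ker_bearingMap_lift (hp : ∀ k, p (E k).1 ≠ p (E k).2)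
    (hq : ∀ i, e (q i) = (p i, 0)) {w : Fin n → EuclideanSpace ℝ (Fin d')} :
    w ∈ LinearMap.ker (bearingMap E q) ↔
      (fun i => (e (w i)).1) ∈ LinearMap.ker (bearingMap E p) ∧
        (fun i => (e (w i)).2) ∈ LinearMap.ker (edgeDiff ℝ M E) := by
  have hq_ne : ∀ k, q (E k).1 ≠ q (E k).2 := fun k h =>
    hp k (by simpa [hq] using congrArg e h)
  have hspan : ∀ (i j : Fin n) (y : EuclideanSpace ℝ (Fin d')),
      y ∈ Submodule.span ℝ {q j - q i} ↔
        (e y).1 ∈ Submodule.span ℝ {p j - p i} ∧ (e y).2 = 0 := by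
    intro i j y
    have he : e (q j - q i) = (p j - p i, 0) := by simp [hq]
    rw [← mem_span_singleton_prodMk_zero, ← he]
    simp only [Submodule.mem_span_singleton, ← map_smul, e.injective.eq_iff]
  rw [mem_ker_bearingMap hq_ne, mem_ker_bearingMap hp, mem_ker_edgeDiff, ← forall_and]
  simp only [hspan, map_sub, Prod.fst_sub, Prod.snd_sub, sub_eq_zero]

theorem finrank_ker_bearingMap_lift [Module.Finite ℝ M] (hp : ∀ k, p (E k).1 ≠ p (E k).2)
    (hq : ∀ i, e (q i) = (p i, 0)) :
    Module.finrank ℝ (LinearMap.ker (bearingMap E q)) =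
      Module.finrank ℝ (LinearMap.ker (bearingMap E p)) +
        Module.finrank ℝ M * Nat.card (edgeGraph E).ConnectedComponent := by
  let split := (LinearEquiv.piCongrRight fun _ : Fin n => e).trans
    (arrowProdLinearEquiv ℝ (EuclideanSpace ℝ (Fin d)) M (Fin n))
  have hmap : (LinearMap.ker (bearingMap E q)).map split.toLinearMap =
      (LinearMap.ker (bearingMap E p)).prod (LinearMap.ker (edgeDiff ℝ M E)) := by
    ext w
    obtain ⟨w, rfl⟩ := split.surjective w
    rw [Submodule.mem_map_equiv, split.symm_apply_apply]
    exact mem_ker_bearingMap_lift e hp hq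
  rw [← split.finrank_map_eq, hmap, finrank_submodule_prod, finrank_ker_edgeDiff]

theorem finrank_range_bearingMap_lift [Module.Finite ℝ M] (hp : ∀ k, p (E k).1 ≠ p (E k).2)
    (hq : ∀ i, e (q i) = (p i, 0)) :
    Module.finrank ℝ (LinearMap.range (bearingMap E q)) =
      Module.finrank ℝ (LinearMap.range (bearingMap E p)) +
        Module.finrank ℝ M * (n - Nat.card (edgeGraph E).ConnectedComponent) := by
  have hker := finrank_ker_bearingMap_lift e hp hq
  have hdn : d' * n = d * n + Module.finrank ℝ M * n := by
    rw [← Nat.add_mul]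
    exact congrArg (· * n) (by simpa using e.finrank_eq)
  have hrank_p := finrank_range_bearingMap_add_finrank_ker E p
  have hrank_q := finrank_range_bearingMap_add_finrank_ker E q
  have hcard : Nat.card (edgeGraph E).ConnectedComponent ≤ n := by
    simpa using Nat.card_le_card_of_surjective (edgeGraph E).connectedComponentMk
      Quot.mk_surjective
  have hmul := Nat.mul_le_mul_left (Module.finrank ℝ M) hcard
  rw [Nat.mul_sub]
  omega

theorem infinitesimallyBearingRigid_lift_iff [Module.Finite ℝ M] (hd : 2 ≤ d) (hn : 2 ≤ n)
    (hp : ∀ k, p (E k).1 ≠ p (E k).2) (hq : ∀ i, e (q i) = (p i, 0)) :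
    InfinitesimallyBearingRigid E q ↔ InfinitesimallyBearingRigid E p := by
  have hker := finrank_ker_bearingMap_lift e hp hq
  have hd' : d' = d + Module.finrank ℝ M := by simpa using e.finrank_eq
  by_cases hconn : (edgeGraph E).Connected
  · rw [card_connectedComponent_eq_one_iff.mpr hconn] at hker
    rw [infinitesimallyBearingRigid_iff_finrank_ker (by omega) hn,
      infinitesimallyBearingRigid_iff_finrank_ker (by omega) hn]
    omega
  · exact iff_of_false (fun h => hconn (h.connected (by omega) hn))
      fun h => hconn (h.connected hd hn)

end Lift

end Bearing

theorem rank_lift_dimension_general {d d' n : ℕ} {ι : Type*} (hd : 2 ≤ d) (hdd : d ≤ d')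
    (hn : 2 ≤ n) (E : ι → Fin n × Fin n) (p : Fin n → EuclideanSpace ℝ (Fin d))
    (hp : ∀ k, p (E k).1 ≠ p (E k).2) (ptilde : Fin n → EuclideanSpace ℝ (Fin d'))
    (hlift : ∀ i : Fin n, ∀ j : Fin d',
      ptilde i j = if h : (j : ℕ) < d then p i ⟨(j : ℕ), h⟩ else 0) :
    Module.finrank ℝ (LinearMap.range (bearingMap E ptilde)) =
      Module.finrank ℝ (LinearMap.range (bearingMap E p)) +
        (d' - d) * (n - Nat.card (edgeGraph E).ConnectedComponent) ∧
    (InfinitesimallyBearingRigid E ptilde ↔ InfinitesimallyBearingRigid E p) := by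
  obtain ⟨r, rfl⟩ := Nat.exists_eq_add_of_le hdd
  let e := (EuclideanSpace.finAddEquivProd (𝕜 := ℝ) (n := d) (m := r)).toLinearEquiv
  have hsplit : ∀ i, e (ptilde i) = (p i, 0) := fun i => by ext j <;> simp [e, hlift]
  refine ⟨?_, infinitesimallyBearingRigid_lift_iff e hd hn hp hsplit⟩
  simpa using finrank_range_bearingMap_lift e hp hsplit

/-- Lifting a framework from `ℝ^d` to `ℝ^{d̃}` (`d̃ > d`) by appending zeros
gives `rank R(p̃) = rank R(p) + (d̃ - d)(n - 1)`; hence `G(p̃)` is infinitesimally bearing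
rigid in `ℝ^{d̃}` iff `G(p)` is infinitesimally bearing rigid in `ℝ^d`. -/
theorem rank_lift_dimension {d d' n m : ℕ} (hd : 2 ≤ d) (hdd : d < d') (hn : 2 ≤ n)
    (E : Fin m → Fin n × Fin n) (p : Fin n → EuclideanSpace ℝ (Fin d))
    (hp : ∀ k, p (E k).1 ≠ p (E k).2)
    (hconn : (SimpleGraph.fromRel fun i j : Fin n => ∃ k, E k = (i, j)).Connected)
    (ptilde : Fin n → EuclideanSpace ℝ (Fin d'))
    (hlift : ∀ i : Fin n, ∀ j : Fin d',
      ptilde i j = if h : (j : ℕ) < d then p i ⟨(j : ℕ), h⟩ else 0) :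
    Module.finrank ℝ (LinearMap.range (bearingMap E ptilde)) =
      Module.finrank ℝ (LinearMap.range (bearingMap E p)) + (d' - d) * (n - 1) ∧
    (Module.finrank ℝ (LinearMap.range (bearingMap E ptilde)) = d' * n - d' - 1 ↔
      Module.finrank ℝ (LinearMap.range (bearingMap E p)) = d * n - d - 1) := by
  simpa only [card_connectedComponent_eq_one_iff.mpr hconn, InfinitesimallyBearingRigid] using
    rank_lift_dimension_general hd hdd.le hn E p hp ptilde hlift
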